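/- Every C_4-free simple graph on 19 vertices has at most 42 edges. -/

import Mathlib

open SimpleGraph

/-- `H` is contained in `G` as a subgraph (injective graph homomorphism). -/
def Contains {W V : Type*} (H : SimpleGraph W) (G : SimpleGraph V) : Prop :=
  ∃ f : H →g G, Function.Injective f

/-- The `i`-th color class of an edge coloring `c` of the complete graph on `V`. -/
def colorClass {V : Type*} {k : ℕ} (c : Sym2 V → Fin k) (i : Fin k) : SimpleGraph V :=
  SimpleGraph.fromRel (fun a b => c s(a, b) = i)

/-!
The bound is proved for all orders up to 19 by induction. A `C₄`-free graph on `n + 1` vertices that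
beats the bound has large minimum degree `k`, as deleting a vertex must not beat the bound for `n`.
Two vertices have at most one common neighbour, so the degrees of the neighbours of `v` sum to at
most `n + 2 * t`, where `t ≤ deg v / 2` is the number of triangles through `v`. With all degrees
at least `k`, this caps `deg v` and the number of neighbours of `v` in the set `H` of vertices of
degree exceeding `k`. In the hardest cases nearly all edges at `H` therefore leave `H`, and
convexity forces more paths of length two with both ends in `H` than there are pairs of vertices
of `H` to join.
-/

section

open Finset

section Interedges

variable {V W : Type*} {F : SimpleGraph W} (G : SimpleGraph V) [DecidableRel G.Adj]

lemma card_interedges_eq_sum (X Y : Finset V) :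
    #(G.interedges X Y) = ∑ v ∈ X, #{w ∈ Y | G.Adj v w} := by
  rw [interedges_def, card_filter, sum_product]
  simp only [card_filter]

lemma card_interedges_comm (X Y : Finset V) :
    #(G.interedges X Y) = #(G.interedges Y X) :=
  have := G.symm
  Rel.card_interedges_comm X Y

lemma two_mul_card_edgeFinset_induce (X : Finset V) :
    2 * #(G.induce (X : Set V)).edgeFinset = #(G.interedges X X) := by
  classical
  rw [← sum_degrees_eq_twice_card_edges, card_interedges_eq_sum,
    ← sum_coe_sort X (fun v ↦ #{w ∈ X | G.Adj v w})]
  refine sum_congr rfl fun v _ ↦ ?_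
  rw [← card_neighborFinset_eq_degree, ← card_map (.subtype (· ∈ (X : Set V)))]
  congr 1
  ext w
  simp [and_comm]

lemma card_filter_adj_univ [Fintype V] (v : V) : #{w | G.Adj v w} = G.degree v := by
  rw [← card_neighborFinset_eq_degree, neighborFinset_eq_filter]

lemma sum_degree_eq_card_interedges_univ [Fintype V] (X : Finset V) :
    ∑ v ∈ X, G.degree v = #(G.interedges X univ) := by
  simp only [card_interedges_eq_sum, card_filter_adj_univ]

lemma sum_degree_eq_card_interedges_add [Fintype V] [DecidableEq V] (X : Finset V) :
    ∑ v ∈ X, G.degree v = #(G.interedges X X) + #(G.interedges X Xᶜ) := by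
  rw [sum_degree_eq_card_interedges_univ, interedges_def, interedges_def, interedges_def,
    ← union_compl X, product_union, filter_union, card_union_of_disjoint]
  exact G.interedges_disjoint_right X disjoint_compl_right

lemma two_mul_card_edgeFinset_add_card_interedges [Fintype V] [DecidableEq V] (X : Finset V) :
    2 * #G.edgeFinset + #(G.interedges X X) =
      #(G.interedges Xᶜ Xᶜ) + 2 * ∑ v ∈ X, G.degree v := by
  have hX := sum_degree_eq_card_interedges_add G X
  have hXc := sum_degree_eq_card_interedges_add G Xᶜ
  rw [compl_compl, card_interedges_comm G Xᶜ X] at hXc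
  have hsum := G.sum_degrees_eq_twice_card_edges
  rw [← sum_add_sum_compl X] at hsum
  lia

variable {G}

lemma two_mul_card_edgeFinset_le_of_degree_le [Fintype V] {k : ℕ} (hk : ∀ v, G.degree v ≤ k) :
    2 * #G.edgeFinset ≤ Fintype.card V * k := by
  rw [← sum_degrees_eq_twice_card_edges, ← smul_eq_mul]
  exact sum_le_card_nsmul univ _ k fun v _ ↦ hk v

lemma card_interedges_self_le (hG : F.Free G) (X : Finset V) :
    #(G.interedges X X) ≤ 2 * extremalNumber #X F := by
  rw [← two_mul_card_edgeFinset_induce, ← Fintype.card_coe X]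
  gcongr
  apply card_edgeFinset_le_extremalNumber
  contrapose hG
  exact hG.trans ⟨Copy.induce G X⟩

lemma card_interedges_self_of_isNClique {s : ℕ} {T : Finset V} (hT : G.IsNClique s T) :
    #(G.interedges T T) = 2 * s.choose 2 := by
  classical
  have hadj : G.interedges T T = T.offDiag := by
    ext ⟨a, b⟩
    rw [mk_mem_interedges_iff, mem_offDiag]
    exact ⟨fun ⟨ha, hb, hab⟩ ↦ ⟨ha, hb, hab.ne⟩, fun ⟨ha, hb, hab⟩ ↦ ⟨ha, hb, hT.1 ha hb hab⟩⟩
  rw [hadj, offDiag_card, hT.2, Nat.choose_two_right,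
    Nat.mul_div_cancel' s.even_mul_pred_self.two_dvd, Nat.mul_sub_one]

lemma card_edgeFinset_add_choose_two_le [Fintype V] (hG : F.Free G) {n m s : ℕ}
    (hm : extremalNumber n F ≤ m) (hV : Fintype.card V = n + s) {T : Finset V}
    (hT : G.IsNClique s T) :
    #G.edgeFinset + s.choose 2 ≤ m + ∑ v ∈ T, G.degree v := by
  classical
  have hcount := two_mul_card_edgeFinset_add_card_interedges G T
  have hrest := card_interedges_self_le hG Tᶜ
  rw [card_compl, hT.2, hV, Nat.add_sub_cancel] at hrest
  rw [card_interedges_self_of_isNClique hT] at hcount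
  lia

lemma exists_free_card_edgeFinset_eq [Fintype V] (hG : F.Free G) {m : ℕ}
    (hm : m ≤ #G.edgeFinset) :
    ∃ G' : SimpleGraph V, ∃ _ : DecidableRel G'.Adj, F.Free G' ∧ #G'.edgeFinset = m := by
  classical
  obtain ⟨E, hE, rfl⟩ := exists_subset_card_eq hm
  have hEG : (E : Set (Sym2 V)) ⊆ G.edgeSet := fun e he ↦ mem_edgeFinset.mp (hE he)
  refine ⟨fromEdgeSet E, inferInstance, fun h ↦ hG (h.mono_right ?_), ?_⟩
  · exact (fromEdgeSet_mono hEG).trans_eq (fromEdgeSet_edgeSet G)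
  · congr 1
    ext e
    simp only [mem_edgeFinset, edgeSet_fromEdgeSet, Set.mem_sdiff, mem_coe, and_iff_left_iff_imp]
    exact fun he ↦ G.not_isDiag_of_mem_edgeSet (hEG he)

lemma extremalNumber_succ_le {n m k : ℕ} (hm : extremalNumber n F ≤ m)
    (hF : ∀ (G : SimpleGraph (Fin (n + 1))) [DecidableRel G.Adj], F.Free G →
      #G.edgeFinset = m + k + 1 → (∀ v, k < G.degree v) → False) :
    extremalNumber (n + 1) F ≤ m + k := by
  by_contra! hlt
  rw [← Fintype.card_fin (n + 1), lt_extremalNumber_iff] at hlt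
  obtain ⟨G₀, _, hfree, hcard⟩ := hlt
  obtain ⟨G, _, hG, hE⟩ := exists_free_card_edgeFinset_eq hfree hcard
  refine hF G hG hE fun v ↦ ?_
  have hdel := card_edgeFinset_add_choose_two_le hG hm (Fintype.card_fin (n + 1))
    ((isNClique_singleton (a := v)).mpr rfl)
  rw [sum_singleton] at hdel
  lia

lemma extremalNumber_succ_le_of_lt {n m k : ℕ} (hm : extremalNumber n F ≤ m)
    (hk : 2 * (m + k + 1) < (n + 1) * (k + 1)) : extremalNumber (n + 1) F ≤ m + k := by
  refine extremalNumber_succ_le hm fun G _ _ hE hdeg ↦ hk.not_ge ?_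
  rw [← hE, ← G.sum_degrees_eq_twice_card_edges]
  simpa using card_nsmul_le_sum univ (G.degree ·) (k + 1) fun v _ ↦ hdeg v

end Interedges

section HighDegree

variable {V W : Type*} [Fintype V] (G : SimpleGraph V) [DecidableRel G.Adj]

/-- The set of vertices of degree larger than `k`; it is used when `k` is a lower bound for the
degrees, so that its complement consists of the vertices of degree exactly `k`. -/
def highDegree (k : ℕ) : Finset V := {v | k < G.degree v}

variable {G} {k : ℕ}

lemma mem_highDegree {v : V} : v ∈ highDegree G k ↔ k < G.degree v := mem_filter_univ v

lemma degree_eq_of_notMem_highDegree (hk : ∀ v, k ≤ G.degree v) {v : V}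
    (hv : v ∉ highDegree G k) : G.degree v = k :=
  le_antisymm (not_lt.mp (mt mem_highDegree.mpr hv)) (hk v)

lemma sum_degree_highDegree_add [DecidableEq V] (hk : ∀ v, k ≤ G.degree v) :
    ∑ v ∈ highDegree G k, G.degree v + k * #(highDegree G k)ᶜ = 2 * #G.edgeFinset := by
  rw [← sum_degrees_eq_twice_card_edges, ← sum_add_sum_compl (highDegree G k), mul_comm,
    sum_const_nat fun v hv ↦ degree_eq_of_notMem_highDegree hk (mem_compl.mp hv)]

lemma mul_degree_add_card_filter_le_sum_degree (hk : ∀ v, k ≤ G.degree v) (v : V) :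
    k * G.degree v + #{w ∈ highDegree G k | G.Adj v w} ≤ ∑ u ∈ G.neighborFinset v, G.degree u := by
  have hfilter : {w ∈ highDegree G k | G.Adj v w} = {u ∈ G.neighborFinset v | k < G.degree u} := by
    ext w
    simp only [mem_filter, mem_highDegree, mem_neighborFinset, and_comm]
  rw [hfilter, card_filter, ← card_neighborFinset_eq_degree, mul_comm, ← smul_eq_mul, ← sum_const,
    ← sum_add_distrib]
  refine sum_le_sum fun u _ ↦ ?_
  split_ifs with hu
  exacts [hu, hk u]

lemma card_highDegree_add_mul_card (hk : ∀ v, k ≤ G.degree v) (hk' : ∀ v, G.degree v ≤ k + 1) :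
    #(highDegree G k) + k * Fintype.card V = 2 * #G.edgeFinset := by
  classical
  rw [← sum_degree_highDegree_add hk, ← card_add_card_compl (highDegree G k),
    sum_const_nat fun v hv ↦ (hk' v).antisymm (mem_highDegree.mp hv)]
  ring

variable {F : SimpleGraph W}

lemma exists_mem_highDegree_of_isNClique (hF : F.Free G) {n m s : ℕ}
    (hm : extremalNumber n F ≤ m) (hV : Fintype.card V = n + s) {T : Finset V}
    (hT : G.IsNClique s T) (h : m + s * k < #G.edgeFinset + s.choose 2) :
    ∃ v ∈ T, v ∈ highDegree G k := by
  by_contra! hlow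
  have hsum : ∑ v ∈ T, G.degree v ≤ s * k := by
    rw [← hT.2]
    exact sum_le_card_nsmul T _ k fun v hv ↦ not_lt.mp (mt mem_highDegree.mpr (hlow v hv))
  have hdel := card_edgeFinset_add_choose_two_le hF hm hV hT
  lia

-- Under `h` the vertices of degree `k` are pairwise non-adjacent: deleting both ends of an edge
-- between two of them would leave too many edges.
lemma card_interedges_highDegree_add [DecidableEq V] (hF : F.Free G) (hk : ∀ v, k ≤ G.degree v)
    {n m : ℕ} (hm : extremalNumber n F ≤ m) (hV : Fintype.card V = n + 2)
    (h : m + 2 * k < #G.edgeFinset + 1) :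
    #(G.interedges (highDegree G k) (highDegree G k)) + 2 * (k * #(highDegree G k)ᶜ) =
      2 * #G.edgeFinset := by
  have hindep : #(G.interedges (highDegree G k)ᶜ (highDegree G k)ᶜ) = 0 := by
    rw [card_eq_zero, eq_empty_iff_forall_notMem]
    rintro ⟨u, v⟩ huv
    obtain ⟨hu, hv, hadj⟩ := G.mk_mem_interedges_iff.mp huv
    rw [mem_compl] at hu hv
    have hedge : G.IsNClique 2 {u, v} :=
      (isNClique_singleton.mpr rfl).insert (by simpa using hadj)
    obtain ⟨w, hw, hwH⟩ := exists_mem_highDegree_of_isNClique hF hm hV hedge h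
    rcases mem_insert.mp hw with rfl | hw
    · exact hu hwH
    · exact hv (mem_singleton.mp hw ▸ hwH)
  have hcount := two_mul_card_edgeFinset_add_card_interedges G (highDegree G k)ᶜ
  rw [hindep, compl_compl, sum_const_nat fun v hv ↦
    degree_eq_of_notMem_highDegree hk (mem_compl.mp hv), mul_comm #_] at hcount
  exact hcount.symm

end HighDegree

section Triangles

variable {V : Type*} [Fintype V] [DecidableEq V] (G : SimpleGraph V) [DecidableRel G.Adj]

/-- The triangles of `G`, as sets of three vertices, that contain the vertex `v`. -/
def trianglesThrough (v : V) : Finset (Finset V) := {T ∈ G.cliqueFinset 3 | v ∈ T}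

variable {G}

lemma mem_trianglesThrough {v : V} {T : Finset V} :
    T ∈ trianglesThrough G v ↔ G.IsNClique 3 T ∧ v ∈ T := by
  rw [trianglesThrough, mem_filter, mem_cliqueFinset_iff]

variable (G)

lemma sum_card_trianglesThrough : ∑ v, #(trianglesThrough G v) = 3 * #(G.cliqueFinset 3) := by
  have hcount := sum_card_bipartiteAbove_eq_sum_card_bipartiteBelow (s := univ)
    (t := G.cliqueFinset 3) fun (v : V) (T : Finset V) ↦ v ∈ T
  refine hcount.trans ?_
  rw [mul_comm]
  refine sum_const_nat fun T hT ↦ ?_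
  rw [bipartiteBelow, filter_univ_mem]
  exact (mem_cliqueFinset_iff.mp hT).2

lemma card_interedges_neighborFinset (v : V) :
    #(G.interedges (G.neighborFinset v) (G.neighborFinset v)) = 2 * #(trianglesThrough G v) := by
  have hmaps : ∀ x ∈ G.interedges (G.neighborFinset v) (G.neighborFinset v),
      ({v, x.1, x.2} : Finset V) ∈ trianglesThrough G v := by
    rintro ⟨a, b⟩ hab
    simp only [mk_mem_interedges_iff, mem_neighborFinset] at hab
    exact mem_trianglesThrough.mpr ⟨is3Clique_triple_iff.mpr ⟨hab.1, hab.2.1, hab.2.2⟩, by simp⟩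
  rw [card_eq_sum_card_fiberwise hmaps, mul_comm]
  refine sum_const_nat fun T hT ↦ ?_
  obtain ⟨hclique, hv⟩ := mem_trianglesThrough.mp hT
  have hfiber : {x ∈ G.interedges (G.neighborFinset v) (G.neighborFinset v) | {v, x.1, x.2} = T} =
      (T.erase v).offDiag := by
    ext ⟨a, b⟩
    simp only [mem_filter, mk_mem_interedges_iff, mem_neighborFinset, mem_offDiag, mem_erase]
    constructor
    · rintro ⟨⟨hva, hvb, hab⟩, rfl⟩
      simp [hva.ne', hvb.ne', hab.ne]
    · rintro ⟨⟨hav, ha⟩, ⟨hbv, hb⟩, hab⟩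
      refine ⟨⟨hclique.1 hv ha hav.symm, hclique.1 hv hb hbv.symm, hclique.1 ha hb hab⟩,
        eq_of_subset_of_card_le (by simp [insert_subset_iff, hv, ha, hb]) ?_⟩
      rw [hclique.2, card_eq_three.mpr ⟨v, a, b, hav.symm, hbv.symm, hab, rfl⟩]
  rw [hfiber, offDiag_card, card_erase_of_mem hv, hclique.2]

end Triangles

section FreeCycleGraphFour

variable {V : Type*} {G : SimpleGraph V}

lemma eq_of_free_cycleGraph_four (hG : (cycleGraph 4).Free G) {u w a b : V} (huw : u ≠ w)
    (hua : G.Adj u a) (hwa : G.Adj w a) (hub : G.Adj u b) (hwb : G.Adj w b) : a = b := by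
  by_contra hab
  refine hG ⟨⟨⟨![u, a, w, b], fun {i j} hij ↦ ?_⟩, fun i j hij ↦ ?_⟩⟩
  · fin_cases i <;> fin_cases j <;>
      first
        | exact absurd hij (by decide)
        | simp [hua, hwa, hub, hwb, hua.symm, hwa.symm, hub.symm, hwb.symm]
  · fin_cases i <;> fin_cases j <;>
      simp_all [hua.ne, hua.ne', hub.ne, hub.ne', hwa.ne, hwa.ne', hwb.ne, hwb.ne', huw.symm]

variable [Fintype V] [DecidableRel G.Adj]

lemma card_filter_adj_adj_le_one (hG : (cycleGraph 4).Free G) {u w : V} (huw : u ≠ w) :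
    #{x | G.Adj x u ∧ G.Adj x w} ≤ 1 := by
  simp only [card_le_one, mem_filter_univ, and_imp]
  exact fun a hau haw b hbu hbw ↦
    eq_of_free_cycleGraph_four hG huw hau.symm haw.symm hbu.symm hbw.symm

lemma card_neighborFinset_filter_adj_le_one (hG : (cycleGraph 4).Free G) {u w : V} (huw : u ≠ w) :
    #{x ∈ G.neighborFinset u | G.Adj w x} ≤ 1 := by
  simp only [card_le_one, mem_filter, mem_neighborFinset, and_imp]
  exact fun a hua hwa b hub hwb ↦ eq_of_free_cycleGraph_four hG huw hua hwa hub hwb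

lemma two_mul_card_trianglesThrough_le_degree [DecidableEq V] (hG : (cycleGraph 4).Free G) (v : V) :
    2 * #(trianglesThrough G v) ≤ G.degree v := by
  rw [← card_interedges_neighborFinset, card_interedges_eq_sum, ← card_neighborFinset_eq_degree,
    card_eq_sum_ones]
  refine sum_le_sum fun u hu ↦ card_neighborFinset_filter_adj_le_one hG ?_
  exact ((G.mem_neighborFinset v u).mp hu).ne

lemma sum_degree_neighborFinset_add_one_le [DecidableEq V] (hG : (cycleGraph 4).Free G) (v : V) :
    ∑ u ∈ G.neighborFinset v, G.degree u + 1 ≤ Fintype.card V + 2 * #(trianglesThrough G v) := by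
  have hv : v ∈ (G.neighborFinset v)ᶜ := by simp
  have hself : #{x ∈ G.neighborFinset v | G.Adj v x} = G.degree v := by
    rw [filter_true_of_mem fun x hx ↦ (G.mem_neighborFinset v x).mp hx,
      card_neighborFinset_eq_degree]
  have hout : ∑ w ∈ (G.neighborFinset v)ᶜ.erase v, #{x ∈ G.neighborFinset v | G.Adj w x} ≤
      #((G.neighborFinset v)ᶜ.erase v) := by
    rw [card_eq_sum_ones]
    exact sum_le_sum fun w hw ↦ card_neighborFinset_filter_adj_le_one hG (ne_of_mem_erase hw).symm
  rw [sum_degree_eq_card_interedges_univ, card_interedges_comm, card_interedges_eq_sum,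
    ← sum_add_sum_compl (G.neighborFinset v), ← card_interedges_eq_sum,
    card_interedges_neighborFinset, ← add_sum_erase _ _ hv, hself]
  have hcompl := card_add_card_compl (G.neighborFinset v)
  rw [← card_erase_add_one hv, card_neighborFinset_eq_degree] at hcompl
  lia

lemma mul_degree_add_card_filter_add_one_le [DecidableEq V] {k : ℕ} (hG : (cycleGraph 4).Free G)
    (hk : ∀ v, k ≤ G.degree v) (v : V) :
    k * G.degree v + #{w ∈ highDegree G k | G.Adj v w} + 1 ≤
      Fintype.card V + 2 * #(trianglesThrough G v) :=
  (Nat.add_le_add_right (mul_degree_add_card_filter_le_sum_degree hk v) 1).trans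
    (sum_degree_neighborFinset_add_one_le hG v)

lemma mul_degree_add_card_filter_add_one_le_two_mul_half {k : ℕ} (hG : (cycleGraph 4).Free G)
    (hk : ∀ v, k ≤ G.degree v) (v : V) :
    k * G.degree v + #{w ∈ highDegree G k | G.Adj v w} + 1 ≤
      Fintype.card V + 2 * (G.degree v / 2) := by
  classical
  have hlocal := mul_degree_add_card_filter_add_one_le hG hk v
  have htri := two_mul_card_trianglesThrough_le_degree hG v
  lia

lemma sum_sq_card_filter_adj_add_card_le (hG : (cycleGraph 4).Free G) (X : Finset V) :
    ∑ x, #{v ∈ X | G.Adj x v} ^ 2 + #X ≤ ∑ v ∈ X, G.degree v + #X ^ 2 := by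
  classical
  have hcount := sum_card_bipartiteAbove_eq_sum_card_bipartiteBelow (s := univ) (t := X ×ˢ X)
    fun x (p : V × V) ↦ G.Adj x p.1 ∧ G.Adj x p.2
  have hsq : ∀ x, #{v ∈ X | G.Adj x v} ^ 2 =
      #(bipartiteAbove (fun x (p : V × V) ↦ G.Adj x p.1 ∧ G.Adj x p.2) (X ×ˢ X) x) := fun x ↦ by
    rw [bipartiteAbove, filter_product (G.Adj x) (G.Adj x), card_product, sq]
  have hdiag : ∑ p ∈ X.diag, #{x | G.Adj x p.1 ∧ G.Adj x p.2} = ∑ v ∈ X, G.degree v := by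
    simp only [sum_diag, and_self, G.adj_comm _ _, card_filter_adj_univ]
  have hcard : #X + #X.offDiag = #X ^ 2 := by
    rw [sq, ← card_product, ← diag_union_offDiag, card_union_of_disjoint (disjoint_diag_offDiag X),
      diag_card]
  have hoffDiag : ∑ p ∈ X.offDiag, #{x | G.Adj x p.1 ∧ G.Adj x p.2} ≤ #X.offDiag := by
    rw [card_eq_sum_ones]
    exact sum_le_sum fun p hp ↦ card_filter_adj_adj_le_one hG (mem_offDiag.mp hp).2.2
  simp only [bipartiteBelow, ← diag_union_offDiag] at hcount
  rw [sum_union (disjoint_diag_offDiag X), hdiag] at hcount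
  simp only [hsq, ← diag_union_offDiag]
  lia

-- `p` and `q` guess how many neighbours in `X` a vertex outside, respectively inside, `X` has: the
-- tangent bound `a ^ 2 ≥ (2 * r + 1) * a - r * (r + 1)` is an equality at `a = r` and `a = r + 1`.
lemma two_mul_mul_card_interedges_add_le [DecidableEq V] (hG : (cycleGraph 4).Free G)
    (X : Finset V) (p q : ℕ) :
    2 * p * #(G.interedges X Xᶜ) + 2 * q * #(G.interedges X X) + #X ≤
      #X ^ 2 + p * (p + 1) * #Xᶜ + q * (q + 1) * #X := by
  have htangent (r a : ℕ) : (2 * r + 1) * a ≤ a ^ 2 + r * (r + 1) := by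
    rcases le_or_gt a r with har | hra
    · obtain ⟨c, rfl⟩ := Nat.exists_eq_add_of_le har
      nlinarith
    · obtain ⟨c, rfl⟩ := Nat.exists_eq_add_of_lt hra
      nlinarith
  have hin : (2 * q + 1) * #(G.interedges X X) ≤
      ∑ x ∈ X, #{v ∈ X | G.Adj x v} ^ 2 + q * (q + 1) * #X := by
    rw [card_interedges_eq_sum, mul_sum, mul_comm _ #X, ← smul_eq_mul #X, ← sum_const,
      ← sum_add_distrib]
    exact sum_le_sum fun x _ ↦ htangent q _
  have hout : (2 * p + 1) * #(G.interedges X Xᶜ) ≤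
      ∑ x ∈ Xᶜ, #{v ∈ X | G.Adj x v} ^ 2 + p * (p + 1) * #Xᶜ := by
    rw [card_interedges_comm, card_interedges_eq_sum, mul_sum, mul_comm _ #Xᶜ, ← smul_eq_mul #Xᶜ,
      ← sum_const, ← sum_add_distrib]
    exact sum_le_sum fun x _ ↦ htangent p _
  have hcherry := sum_sq_card_filter_adj_add_card_le hG X
  rw [← sum_add_sum_compl X, sum_degree_eq_card_interedges_add] at hcherry
  linarith

lemma four_mul_mul_card_edgeFinset_add_le_of_le_degree [DecidableEq V] {k : ℕ}
    (hG : (cycleGraph 4).Free G) (hk : ∀ v, k ≤ G.degree v) (p q : ℕ) :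
    4 * p * #G.edgeFinset + 2 * q * #(G.interedges (highDegree G k) (highDegree G k)) +
        #(highDegree G k) ≤
      #(highDegree G k) ^ 2 + p * (p + 1) * #(highDegree G k)ᶜ + q * (q + 1) * #(highDegree G k) +
        2 * p * (k * #(highDegree G k)ᶜ + #(G.interedges (highDegree G k) (highDegree G k))) := by
  have hsum := sum_degree_highDegree_add hk
  rw [sum_degree_eq_card_interedges_add] at hsum
  have hcherry := two_mul_mul_card_interedges_add_le hG (highDegree G k) p q
  linear_combination hcherry + 2 * p * hsum.symm

lemma four_mul_mul_card_edgeFinset_add_card_le (hG : (cycleGraph 4).Free G) (q : ℕ) :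
    4 * q * #G.edgeFinset + Fintype.card V ≤
      Fintype.card V ^ 2 + q * (q + 1) * Fintype.card V := by
  classical
  have hcherry := two_mul_mul_card_interedges_add_le hG univ 0 q
  rw [← sum_degree_eq_card_interedges_univ, sum_degrees_eq_twice_card_edges, card_univ] at hcherry
  linarith

end FreeCycleGraphFour

section ExtremalNumber

lemma extremalNumber_cycleGraph_four_le {n m : ℕ} (q : ℕ)
    (h : n ^ 2 + q * (q + 1) * n < 4 * q * (m + 1) + n) :
    extremalNumber n (cycleGraph 4) ≤ m := by
  rw [← Fintype.card_fin n, extremalNumber_le_iff]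
  intro G _ hG
  have hcherry := four_mul_mul_card_edgeFinset_add_card_le hG q
  rw [Fintype.card_fin] at hcherry
  exact Nat.lt_succ_iff.mp (lt_of_mul_lt_mul_left (by lia) (Nat.zero_le (4 * q)))

lemma extremalNumber_four_cycleGraph_four_le : extremalNumber 4 (cycleGraph 4) ≤ 4 :=
  extremalNumber_cycleGraph_four_le 2 (by norm_num)

lemma extremalNumber_five_cycleGraph_four_le : extremalNumber 5 (cycleGraph 4) ≤ 6 :=
  extremalNumber_cycleGraph_four_le 2 (by norm_num)

lemma extremalNumber_six_cycleGraph_four_le : extremalNumber 6 (cycleGraph 4) ≤ 7 := by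
  refine extremalNumber_succ_le (k := 1) extremalNumber_five_cycleGraph_four_le
    fun G _ hG hE hk ↦ ?_
  have hindep := card_interedges_highDegree_add (k := 2) hG hk
    extremalNumber_four_cycleGraph_four_le (Fintype.card_fin _) (by lia)
  have hlocal := mul_degree_add_card_filter_add_one_le_two_mul_half (k := 2) hG hk
  rw [Fintype.card_fin] at hlocal
  have hin : #(G.interedges (highDegree G 2) (highDegree G 2)) ≤ #(highDegree G 2) := by
    rw [card_interedges_eq_sum, card_eq_sum_ones]
    exact sum_le_sum fun v hv ↦ by
      have hloc := hlocal v
      have hdv := mem_highDegree.mp hv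
      lia
  have hcherry := four_mul_mul_card_edgeFinset_add_le_of_le_degree (k := 2) hG hk 1 0
  have hcard := card_add_card_compl (highDegree G 2)
  rw [Fintype.card_fin] at hcard
  have hH : #(highDegree G 2) = 2 := by lia
  rw [hH] at hcherry
  lia

lemma extremalNumber_seven_cycleGraph_four_le : extremalNumber 7 (cycleGraph 4) ≤ 9 :=
  extremalNumber_succ_le_of_lt (k := 2) extremalNumber_six_cycleGraph_four_le (by norm_num)

lemma extremalNumber_eight_cycleGraph_four_le : extremalNumber 8 (cycleGraph 4) ≤ 11 := by
  refine extremalNumber_succ_le (k := 2) extremalNumber_seven_cycleGraph_four_le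
    fun G _ hG _ hk ↦ ?_
  have htri : ∀ v ∈ univ, #(trianglesThrough G v) = 1 := fun v _ ↦ by
    have hlower := mul_degree_add_card_filter_add_one_le (k := 3) hG hk v
    have hupper := two_mul_card_trianglesThrough_le_degree hG v
    rw [Fintype.card_fin] at hlower
    have hkv := hk v
    lia
  have hsum := sum_card_trianglesThrough G
  rw [sum_const_nat htri, card_univ, Fintype.card_fin] at hsum
  lia

lemma extremalNumber_nine_cycleGraph_four_le : extremalNumber 9 (cycleGraph 4) ≤ 13 := by
  refine extremalNumber_succ_le (k := 2) extremalNumber_eight_cycleGraph_four_le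
    fun G _ hG hE hk ↦ ?_
  have hlocal := mul_degree_add_card_filter_add_one_le_two_mul_half (k := 3) hG hk
  rw [Fintype.card_fin] at hlocal
  have hdeg : ∀ v, G.degree v ≤ 4 := fun v ↦ by
    have hloc := hlocal v
    lia
  have hH := card_highDegree_add_mul_card (k := 3) hk hdeg
  rw [Fintype.card_fin] at hH
  obtain ⟨w, hw⟩ := card_eq_one.mp (show #(highDegree G 3) = 1 by lia)
  have hadj : ∀ v, v ≠ w → G.Adj w v := fun v hvw ↦ by
    have htri := mul_degree_add_card_filter_add_one_le (k := 3) hG hk v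
    rw [Fintype.card_fin] at htri
    have hkv := hk v
    obtain ⟨T, hT⟩ := card_pos.mp (show 0 < #(trianglesThrough G v) by lia)
    obtain ⟨hclique, hvT⟩ := mem_trianglesThrough.mp hT
    obtain ⟨u, huT, hu⟩ := exists_mem_highDegree_of_isNClique (k := 3) hG
      extremalNumber_six_cycleGraph_four_le (Fintype.card_fin _) hclique (by
        rw [Nat.choose_succ_self_right]
        lia)
    rw [hw, mem_singleton] at hu
    exact hu ▸ hclique.1 huT hvT (hu ▸ hvw.symm)
  have hcompl : #{w}ᶜ ≤ G.degree w := by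
    rw [← card_neighborFinset_eq_degree]
    refine card_le_card fun v hv ↦ (G.mem_neighborFinset w v).mpr (hadj v ?_)
    simpa using hv
  rw [card_compl, card_singleton, Fintype.card_fin] at hcompl
  exact absurd (hcompl.trans (hdeg w)) (by norm_num)

lemma extremalNumber_ten_cycleGraph_four_le : extremalNumber 10 (cycleGraph 4) ≤ 16 :=
  extremalNumber_succ_le_of_lt (k := 3) extremalNumber_nine_cycleGraph_four_le (by norm_num)

lemma extremalNumber_eleven_cycleGraph_four_le : extremalNumber 11 (cycleGraph 4) ≤ 18 := by
  refine extremalNumber_succ_le (k := 2) extremalNumber_ten_cycleGraph_four_le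
    fun G _ hG hE hk ↦ ?_
  have hlocal := mul_degree_add_card_filter_add_one_le_two_mul_half (k := 3) hG hk
  rw [Fintype.card_fin] at hlocal
  have hdeg : ∀ v, G.degree v ≤ 4 := fun v ↦ by
    have hloc := hlocal v
    lia
  have hH := card_highDegree_add_mul_card (k := 3) hk hdeg
  have hL := card_add_card_compl (highDegree G 3)
  have hindep := card_interedges_highDegree_add (k := 3) hG hk
    extremalNumber_nine_cycleGraph_four_le (Fintype.card_fin _) (by lia)
  have hcherry := four_mul_mul_card_edgeFinset_add_le_of_le_degree (k := 3) hG hk 2 0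
  rw [Fintype.card_fin] at hH hL
  rw [show #(highDegree G 3) = 5 by lia] at hcherry hL
  lia

lemma extremalNumber_twelve_cycleGraph_four_le : extremalNumber 12 (cycleGraph 4) ≤ 21 :=
  extremalNumber_succ_le_of_lt (k := 3) extremalNumber_eleven_cycleGraph_four_le (by norm_num)

lemma extremalNumber_thirteen_cycleGraph_four_le : extremalNumber 13 (cycleGraph 4) ≤ 24 :=
  extremalNumber_succ_le_of_lt (k := 3) extremalNumber_twelve_cycleGraph_four_le (by norm_num)

lemma extremalNumber_fourteen_cycleGraph_four_le : extremalNumber 14 (cycleGraph 4) ≤ 27 := by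
  refine extremalNumber_succ_le (k := 3) extremalNumber_thirteen_cycleGraph_four_le
    fun G _ hG hE hk ↦ ?_
  have hlocal := mul_degree_add_card_filter_add_one_le_two_mul_half (k := 4) hG hk
  rw [Fintype.card_fin] at hlocal
  have hreg : ∀ v, G.degree v = 4 := fun v ↦ by
    have hloc := hlocal v
    have hkv := hk v
    lia
  have htri := mul_degree_add_card_filter_add_one_le (k := 4) hG hk 0
  rw [hreg, Fintype.card_fin] at htri
  obtain ⟨T, hT⟩ := card_pos.mp (show 0 < #(trianglesThrough G 0) by lia)
  obtain ⟨v, -, hv⟩ := exists_mem_highDegree_of_isNClique (k := 4) hG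
    extremalNumber_eleven_cycleGraph_four_le (Fintype.card_fin _) (mem_trianglesThrough.mp hT).1 (by
      rw [Nat.choose_succ_self_right]
      lia)
  exact (mem_highDegree.mp hv).ne' (hreg v)

lemma extremalNumber_fifteen_cycleGraph_four_le : extremalNumber 15 (cycleGraph 4) ≤ 30 := by
  refine extremalNumber_succ_le (k := 3) extremalNumber_fourteen_cycleGraph_four_le
    fun G _ hG hE hk ↦ ?_
  have hlocal := mul_degree_add_card_filter_add_one_le_two_mul_half (k := 4) hG hk
  rw [Fintype.card_fin] at hlocal
  have hsum := two_mul_card_edgeFinset_le_of_degree_le (G := G) (k := 4) fun v ↦ by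
    have hloc := hlocal v
    lia
  rw [Fintype.card_fin] at hsum
  lia

lemma extremalNumber_sixteen_cycleGraph_four_le : extremalNumber 16 (cycleGraph 4) ≤ 33 := by
  refine extremalNumber_succ_le (k := 3) extremalNumber_fifteen_cycleGraph_four_le
    fun G _ hG hE hk ↦ ?_
  have hlocal := mul_degree_add_card_filter_add_one_le_two_mul_half (k := 4) hG hk
  rw [Fintype.card_fin] at hlocal
  have hsum := two_mul_card_edgeFinset_le_of_degree_le (G := G) (k := 4) fun v ↦ by
    have hloc := hlocal v
    lia
  rw [Fintype.card_fin] at hsum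
  lia

lemma extremalNumber_seventeen_cycleGraph_four_le : extremalNumber 17 (cycleGraph 4) ≤ 36 := by
  refine extremalNumber_succ_le (k := 3) extremalNumber_sixteen_cycleGraph_four_le
    fun G _ hG hE hk ↦ ?_
  have hlocal := mul_degree_add_card_filter_add_one_le_two_mul_half (k := 4) hG hk
  rw [Fintype.card_fin] at hlocal
  have hH := card_highDegree_add_mul_card (k := 4) hk fun v ↦ by
    have hloc := hlocal v
    lia
  have hL := card_add_card_compl (highDegree G 4)
  have hin : #(G.interedges (highDegree G 4) (highDegree G 4)) = 0 := by
    rw [card_interedges_eq_sum]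
    exact sum_eq_zero fun v hv ↦ by
      have hloc := hlocal v
      have hdv := mem_highDegree.mp hv
      lia
  have hcherry := four_mul_mul_card_edgeFinset_add_le_of_le_degree (k := 4) hG hk 2 0
  rw [Fintype.card_fin] at hH hL
  rw [show #(highDegree G 4) = 6 by lia] at hcherry hL
  lia

lemma extremalNumber_eighteen_cycleGraph_four_le : extremalNumber 18 (cycleGraph 4) ≤ 39 := by
  refine extremalNumber_succ_le (k := 3) extremalNumber_seventeen_cycleGraph_four_le
    fun G _ hG hE hk ↦ ?_
  have hlocal := mul_degree_add_card_filter_add_one_le_two_mul_half (k := 4) hG hk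
  rw [Fintype.card_fin] at hlocal
  have hH := card_highDegree_add_mul_card (k := 4) hk fun v ↦ by
    have hloc := hlocal v
    lia
  have hL := card_add_card_compl (highDegree G 4)
  have hin : #(G.interedges (highDegree G 4) (highDegree G 4)) ≤ #(highDegree G 4) := by
    rw [card_interedges_eq_sum, card_eq_sum_ones]
    exact sum_le_sum fun v hv ↦ by
      have hloc := hlocal v
      have hdv := mem_highDegree.mp hv
      lia
  have hcherry := four_mul_mul_card_edgeFinset_add_le_of_le_degree (k := 4) hG hk 3 0
  rw [Fintype.card_fin] at hH hL
  rw [show #(highDegree G 4) = 8 by lia] at hcherry hin hL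
  lia

lemma extremalNumber_nineteen_cycleGraph_four_le : extremalNumber 19 (cycleGraph 4) ≤ 42 := by
  refine extremalNumber_succ_le (k := 3) extremalNumber_eighteen_cycleGraph_four_le
    fun G _ hG hE hk ↦ ?_
  have hlocal := mul_degree_add_card_filter_add_one_le_two_mul_half (k := 4) hG hk
  rw [Fintype.card_fin] at hlocal
  have hin : #(G.interedges (highDegree G 4) (highDegree G 4)) +
      2 * ∑ v ∈ highDegree G 4, G.degree v ≤ #(highDegree G 4) * 12 := by
    rw [card_interedges_eq_sum, mul_sum, ← sum_add_distrib, ← smul_eq_mul]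
    exact sum_le_card_nsmul _ _ 12 fun v hv ↦ by
      have hloc := hlocal v
      have hdv := mem_highDegree.mp hv
      lia
  have hdeg : #(highDegree G 4) * 5 ≤ ∑ v ∈ highDegree G 4, G.degree v :=
    card_nsmul_le_sum _ _ 5 fun v hv ↦ mem_highDegree.mp hv
  have hsum := sum_degree_highDegree_add (k := 4) hk
  have hL := card_add_card_compl (highDegree G 4)
  have hcherry₂₁ := four_mul_mul_card_edgeFinset_add_le_of_le_degree (k := 4) hG hk 2 1
  have hcherry₃₁ := four_mul_mul_card_edgeFinset_add_le_of_le_degree (k := 4) hG hk 3 1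
  rw [Fintype.card_fin] at hL
  have hlower : 5 ≤ #(highDegree G 4) := by lia
  have hupper : #(highDegree G 4) ≤ 10 := by lia
  generalize #(highDegree G 4) = h at *
  interval_cases h <;> lia

end ExtremalNumber

end

lemma contains_iff_isContained {V W : Type*} {H : SimpleGraph W} {G : SimpleGraph V} :
    Contains H G ↔ H ⊑ G :=
  ⟨fun ⟨f, hf⟩ ↦ ⟨⟨f, hf⟩⟩, fun ⟨f⟩ ↦ ⟨f.toHom, f.injective⟩⟩

theorem stmt2 (G : SimpleGraph (Fin 19)) [DecidableRel G.Adj]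
    (hG : ¬ Contains (cycleGraph 4) G) :
    G.edgeFinset.card ≤ 42 := by
  have hfree : (cycleGraph 4).Free G := mt contains_iff_isContained.mpr hG
  calc G.edgeFinset.card
      ≤ extremalNumber (Fintype.card (Fin 19)) (cycleGraph 4) :=
        card_edgeFinset_le_extremalNumber hfree
    _ = extremalNumber 19 (cycleGraph 4) := by rw [Fintype.card_fin]
    _ ≤ 42 := extremalNumber_nineteen_cycleGraph_four_le
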